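/- arXiv:2303.09815 — 2 statements merged into one kernel-verified Lean document; each statement's English description precedes it below -/
import Mathlib

section
/- Every free group is residually a 𝒞-group, where 𝒞 is any root class of groups. -/
universe u

/-- A class of groups: a predicate on groups. -/
def GClass : Type (u + 1) := ∀ (G : Type u) [Group G], Prop

/-- Closure under isomorphism. -/
def ClosedIso (C : GClass.{u}) : Prop :=
  ∀ (G H : Type u) [Group G] [Group H], (G ≃* H) → C G → C H

/-- Closure under taking subgroups. -/
def ClosedSub (C : GClass.{u}) : Prop :=
  ∀ (G : Type u) [Group G] (H : Subgroup G), C G → C H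

/-- Closure under extensions. -/
def ClosedExt (C : GClass.{u}) : Prop :=
  ∀ (G : Type u) [Group G] (N : Subgroup G) [N.Normal], C N → C (G ⧸ N) → C G

/-- Closure under unrestricted direct powers ∏_{y ∈ Y} X with X, Y ∈ C. -/
def ClosedPow (C : GClass.{u}) : Prop :=
  ∀ (X Y : Type u) [Group X] [Group Y], C X → C Y → C (Y → X)

/-- A root class of groups. -/
def IsRootClass (C : GClass.{u}) : Prop :=
  (∃ (G : Type u) (_ : Group G), C G ∧ Nontrivial G) ∧
    ClosedIso C ∧ ClosedSub C ∧ ClosedExt C ∧ ClosedPow C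

/-- `G` is residually a `C`-group. -/
def Residually (C : GClass.{u}) (G : Type u) [Group G] : Prop :=
  ∀ g : G, g ≠ 1 → ∃ (Q : Type u) (_ : Group Q) (σ : G →* Q),
    C Q ∧ Function.Surjective σ ∧ σ g ≠ 1

theorem aux_closed_hom {C : GClass.{u}} (hC : IsRootClass C) {G Q : Type u} [Group G] [Group Q]
    (f : G →* Q) (hK : C f.ker) (hQ : C Q) : C G := by
  obtain ⟨_, hIso, hSub, hExt, _⟩ := hC
  exact hExt G f.ker hK
    (hIso f.range (G ⧸ f.ker) (QuotientGroup.quotientKerEquivRange f).symm (hSub Q f.range hQ))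

theorem aux_prod {C : GClass.{u}} (hC : IsRootClass C) {P Q : Type u} [Group P] [Group Q]
    (hP : C P) (hQ : C Q) : C (P × Q) := by
  refine aux_closed_hom hC (MonoidHom.snd P Q) ?_ hQ
  refine hC.2.1 P _ ?_ hP
  exact
    { toFun := fun p => ⟨(p, 1), rfl⟩
      invFun := fun x => x.1.1
      left_inv := fun p => rfl
      right_inv := fun x => by
        rcases x with ⟨⟨p, q⟩, h⟩
        have h2 : q = 1 := h
        subst h2
        rfl
      map_mul' := fun p q => by
        apply Subtype.ext
        simp }

theorem aux_wreath {C : GClass.{u}} (hC : IsRootClass C) {P Q : Type u} [Group P] [Group Q]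
    (hP : C P) (hQ : C Q) : C (RegularWreathProduct P Q) := by
  refine aux_closed_hom hC (RegularWreathProduct.rightHom : RegularWreathProduct P Q →* Q) ?_ hQ
  refine hC.2.1 (Q → P) _ ?_ (hC.2.2.2.2 P Q hP hQ)
  exact
    { toFun := fun p => ⟨⟨p, 1⟩, rfl⟩
      invFun := fun x => x.1.left
      left_inv := fun p => rfl
      right_inv := fun x => by
        rcases x with ⟨⟨p, q⟩, h⟩
        have h2 : q = 1 := h
        subst h2
        rfl
      map_mul' := fun p q => by
        apply Subtype.ext
        ext <;> simp }

/-- `g` is separated from `1` by some homomorphism to a `C`-group. -/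
def AuxSep (C : GClass.{u}) {F : Type u} [Group F] (g : F) : Prop :=
  ∃ (Q : Type u) (_ : Group Q) (σ : F →* Q), C Q ∧ σ g ≠ 1

theorem aux_list {C : GClass.{u}} (hC : IsRootClass C) {F : Type u} [Group F] (l : List F) :
    ∃ (Q : Type u) (_ : Group Q) (σ : F →* Q), C Q ∧ ∀ g ∈ l, AuxSep C g → σ g ≠ 1 := by
  induction l with
  | nil =>
    obtain ⟨⟨G, iG, hG, _⟩, _⟩ := hC
    exact ⟨G, iG, 1, hG, by simp⟩
  | cons g l ih =>
    obtain ⟨Q, iQ, σ, hQ, h⟩ := ih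
    by_cases hg : AuxSep C g
    · obtain ⟨R, iR, τ, hR, ht⟩ := hg
      refine ⟨Q × R, inferInstance, σ.prod τ, aux_prod hC hQ hR, ?_⟩
      intro k hk hs h1
      have h2 : σ k = 1 ∧ τ k = 1 := by simpa [Prod.ext_iff] using h1
      rcases List.mem_cons.1 hk with rfl | hk
      · exact ht h2.2
      · exact h k hk hs h2.1
    · refine ⟨Q, iQ, σ, hQ, ?_⟩
      intro k hk hs
      rcases List.mem_cons.1 hk with rfl | hk
      · exact absurd hs hg
      · exact h k hk hs

theorem aux_left {α P Q : Type u} [Group P] [Group Q]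
    (σ : FreeGroup α →* RegularWreathProduct P Q) (M : List (α × Bool)) :
    ∀ x : Q, (∀ S c T, M = S ++ c :: T →
      (σ (FreeGroup.mk [c])).left ((σ (FreeGroup.mk S)).right⁻¹ * x) = 1) →
      (σ (FreeGroup.mk M)).left x = 1 := by
  induction M with
  | nil =>
    intro x _
    have : (FreeGroup.mk [] : FreeGroup α) = 1 := rfl
    rw [this, map_one]; rfl
  | cons c M ih =>
    intro x h
    have e : ∀ L : List (α × Bool),
        FreeGroup.mk (c :: L) = FreeGroup.mk [c] * FreeGroup.mk L := fun L => by
      rw [FreeGroup.mul_mk]; rfl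
    have h0 := h [] c M rfl
    have h00 : (FreeGroup.mk [] : FreeGroup α) = 1 := rfl
    rw [h00, map_one] at h0
    have h1 := ih ((σ (FreeGroup.mk [c])).right⁻¹ * x) (by
      intro S d T hM
      have := h (c :: S) d T (by rw [hM]; rfl)
      rw [e S, map_mul] at this
      simpa [mul_assoc] using this)
    rw [e M, map_mul]
    simp only [RegularWreathProduct.mul_left, Pi.mul_apply, h1, mul_one]
    simpa using h0

theorem aux_main {C : GClass.{u}} (hC : IsRootClass C) {α : Type u} (n : ℕ) :
    ∀ L : List (α × Bool), L.length = n → FreeGroup.IsReduced L → L ≠ [] →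
      AuxSep C (FreeGroup.mk L) := by
  classical
  induction n using Nat.strong_induction_on with
  | _ n ih =>
  intro L hn hred hne
  obtain ⟨Q, iQ, φ, hQ, hφ⟩ := aux_list hC (L.sublists.map FreeGroup.mk)
  have key : ∀ S, S <:+: L → S ≠ [] → S.length < L.length → φ (FreeGroup.mk S) ≠ 1 := by
    intro S hS hS0 hlt
    apply hφ
    · exact List.mem_map_of_mem (List.mem_sublists.2 hS.sublist)
    · exact ih S.length (hn ▸ hlt) S rfl (hred.infix hS) hS0
  obtain ⟨G, iG, hG, hnt⟩ := hC.1
  obtain ⟨a, ha⟩ := exists_ne (1 : G)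
  match L, hne with
  | (x0, b0) :: M, _ =>
  let q0 : Q := if b0 then 1 else φ (FreeGroup.of x0)
  let σ : FreeGroup α →* RegularWreathProduct G Q :=
    FreeGroup.lift (fun y => ⟨fun q => if q = q0 ∧ y = x0 then a else 1, φ (FreeGroup.of y)⟩)
  have hr : ∀ w, (σ w).right = φ w := by
    intro w
    have : RegularWreathProduct.rightHom.comp σ = φ := by
      ext y; simp [σ]
    exact DFunLike.congr_fun this w
  have hmt : ∀ y : α, FreeGroup.mk [(y, true)] = FreeGroup.of y := fun y => rfl
  have hmf : ∀ y : α, FreeGroup.mk [(y, false)] = (FreeGroup.of y)⁻¹ := fun y => rfl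
  have ht : ∀ y q, (σ (FreeGroup.mk [(y, true)])).left q = if q = q0 ∧ y = x0 then a else 1 := by
    intro y q; rw [hmt]; simp [σ]
  have hf : ∀ y q, (σ (FreeGroup.mk [(y, false)])).left q =
      (if φ (FreeGroup.of y) * q = q0 ∧ y = x0 then a else 1)⁻¹ := by
    intro y q; rw [hmf]; simp [σ]
  have e : ∀ (c : α × Bool) (L : List (α × Bool)),
      FreeGroup.mk (c :: L) = FreeGroup.mk [c] * FreeGroup.mk L := fun c L => by
    rw [FreeGroup.mul_mk]; rfl
  refine ⟨RegularWreathProduct G Q, inferInstance, σ, aux_wreath hC hG hQ, ?_⟩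
  have htail : (σ (FreeGroup.mk M)).left ((φ (FreeGroup.mk [(x0, b0)]))⁻¹ * 1) = 1 := by
    apply aux_left
    rintro S ⟨y, b⟩ T rfl
    rw [hr]
    have k1 : φ (FreeGroup.mk ((x0, b0) :: S)) ≠ 1 :=
      key _ ⟨[], (y, b) :: T, by simp⟩ (by simp) (by simp)
    have k2 : y = x0 → b ≠ b0 → φ (FreeGroup.mk S) ≠ 1 := by
      intro hy hb
      by_cases hS : S = []
      · subst hS
        exfalso
        have := (FreeGroup.isReduced_cons_cons.1 hred).1 hy.symm
        exact hb this.symm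
      · exact key _ ⟨[(x0, b0)], (y, b) :: T, by simp⟩ hS (by simp)
    rw [e, map_mul] at k1
    by_cases hy : y = x0
    · subst hy
      cases b <;> cases b0
      · rw [hf, if_neg, inv_one]
        rintro ⟨h, -⟩
        rw [hmf, map_inv] at h k1
        have h' : φ (FreeGroup.of y) * ((φ (FreeGroup.mk S))⁻¹ * φ (FreeGroup.of y)) =
          φ (FreeGroup.of y) := by simpa [q0] using h
        have h3 := mul_eq_left.1 h'
        exact k1 (by rw [inv_mul_eq_one.1 h3]; simp)
      · rw [hf, if_neg, inv_one]
        rintro ⟨h, -⟩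
        rw [hmt] at h
        have h' : φ (FreeGroup.of y) * ((φ (FreeGroup.mk S))⁻¹ * (φ (FreeGroup.of y))⁻¹) = 1 := by
          simpa [q0] using h
        rw [← mul_assoc, mul_inv_eq_one, mul_eq_left, inv_eq_one] at h'
        exact k2 rfl (by simp) h'
      · rw [ht, if_neg]
        rintro ⟨h, -⟩
        rw [hmf, map_inv] at h
        have h' : (φ (FreeGroup.mk S))⁻¹ * φ (FreeGroup.of y) = φ (FreeGroup.of y) := by
          simpa only [q0, inv_inv, mul_one, Bool.false_eq_true, if_false] using h
        rw [mul_eq_right, inv_eq_one] at h'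
        exact k2 rfl (by simp) h'
      · rw [ht, if_neg]
        rintro ⟨h, -⟩
        have h' : (φ (FreeGroup.mk S))⁻¹ * (φ (FreeGroup.mk [(y, true)]))⁻¹ = 1 := by
          simpa only [q0, mul_one, if_true] using h
        rw [← mul_inv_rev, inv_eq_one] at h'
        exact k1 h'
    · cases b <;> simp [ht, hf, hy]
  intro h1
  have h2 : (σ (FreeGroup.mk ((x0, b0) :: M))).left 1 = 1 := by rw [h1]; rfl
  rw [e, map_mul] at h2
  simp only [RegularWreathProduct.mul_left, Pi.mul_apply, hr] at h2
  rw [htail, mul_one] at h2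
  cases b0
  · rw [hf] at h2; simp [q0] at h2; exact ha h2
  · rw [ht] at h2; simp [q0] at h2; exact ha h2

/-- Proposition 3.3 (1): every free group is residually a `C`-group, for any root class `C`. -/
theorem stmt_3 (C : GClass.{u}) (hC : IsRootClass C) (α : Type u) :
    Residually C (FreeGroup α) := by
  classical
  intro g hg
  have hs : AuxSep C (FreeGroup.mk g.toWord) :=
    aux_main hC _ g.toWord rfl FreeGroup.isReduced_toWord (by simpa using hg)
  rw [FreeGroup.mk_toWord] at hs
  obtain ⟨Q, iQ, σ, hQ, h⟩ := hs
  refine ⟨σ.range, inferInstance, σ.rangeRestrict, hC.2.2.1 Q _ hQ,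
    σ.rangeRestrict_surjective, ?_⟩
  intro h1
  exact h (by simpa using congrArg Subtype.val h1)
end

section
/- Let 𝒞 be a root class of groups and let Ω be a family of groups, each of which is residually a 𝒞-group. If a group G has a normal subgroup N such that G/N ∈ 𝒞 and N is a free product of a family of groups, each factor of which is either a free group or embeds into a member of Ω, then G is residually a 𝒞-group. -/
universe u

/-- `g` survives in some homomorphism to a `C`-group. -/
def SepBy (C : GClass.{u}) {G : Type u} [Group G] (g : G) : Prop :=
  ∃ (Q : Type u) (_ : Group Q) (σ : G →* Q), C Q ∧ σ g ≠ 1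

section root
variable {C : GClass.{u}} (hC : IsRootClass C)

theorem residually_of_sep (hC : IsRootClass C) {G : Type u} [Group G]
    (h : ∀ g : G, g ≠ 1 → SepBy C g) : Residually C G := by
  intro g hg
  obtain ⟨Q, _, σ, hQ, hs⟩ := h g hg
  refine ⟨σ.range, inferInstance, σ.rangeRestrict, hC.2.2.1 Q σ.range hQ,
    σ.rangeRestrict_surjective, ?_⟩
  intro h1
  exact hs (congrArg Subtype.val h1)

theorem sep_of_residually {G : Type u} [Group G]
    (h : Residually C G) (g : G) (hg : g ≠ 1) : SepBy C g := by
  obtain ⟨Q, _, σ, hQ, _, hs⟩ := h g hg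
  exact ⟨Q, _, σ, hQ, hs⟩

theorem sep_of_map {G H : Type u} [Group G] [Group H] (f : G →* H) (g : G)
    (h : SepBy C (f g)) : SepBy C g := by
  obtain ⟨Q, _, σ, hQ, hs⟩ := h
  exact ⟨Q, _, σ.comp f, hQ, hs⟩

theorem mem_of_injective (hC : IsRootClass C) {G Q : Type u} [Group G] [Group Q] (f : G →* Q)
    (hf : Function.Injective f) (hQ : C Q) : C G :=
  hC.2.1 _ _ (MonoidHom.ofInjective hf).symm (hC.2.2.1 Q f.range hQ)

theorem mem_of_ext (hC : IsRootClass C) {G Q : Type u} [Group G] [Group Q] (f : G →* Q)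
    (hf : Function.Surjective f) (hK : C f.ker) (hQ : C Q) : C G :=
  hC.2.2.2.1 G f.ker hK (hC.2.1 _ _ (QuotientGroup.quotientKerEquivOfSurjective f hf).symm hQ)

theorem mem_unit (hC : IsRootClass C) : C PUnit.{u + 1} := by
  obtain ⟨G, _, hG, _⟩ := hC.1
  exact mem_of_injective hC (1 : PUnit.{u + 1} →* G) (fun _ _ _ => rfl) hG

theorem mem_prod (hC : IsRootClass C) {A B : Type u} [Group A] [Group B] (hA : C A) (hB : C B) :
    C (A × B) := by
  refine mem_of_ext hC (MonoidHom.snd A B) Prod.snd_surjective ?_ hB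
  refine mem_of_injective hC ((MonoidHom.fst A B).comp (MonoidHom.ker _).subtype) ?_ hA
  rintro ⟨⟨a, b⟩, h⟩ ⟨⟨a', b'⟩, h'⟩ e
  have h : b = 1 := h
  have h' : b' = 1 := h'
  have e : a = a' := e
  subst h h' e
  rfl

theorem mem_wreath (hC : IsRootClass C) {A B : Type u} [Group A] [Group B] (hA : C A) (hB : C B) :
    C (RegularWreathProduct A B) := by
  refine mem_of_ext hC (RegularWreathProduct.rightHom) (fun q => ⟨⟨1, q⟩, rfl⟩) ?_ hB
  let j : (RegularWreathProduct.rightHom : RegularWreathProduct A B →* B).ker →* (B → A) :=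
    { toFun := fun x => x.1.left
      map_one' := rfl
      map_mul' := by
        rintro ⟨⟨a, b⟩, h⟩ ⟨⟨a', b'⟩, h'⟩
        have h : b = 1 := h
        have h' : b' = 1 := h'
        subst h h'
        ext x
        simp }
  refine mem_of_injective hC j ?_ (hC.2.2.2.2 A B hA hB)
  rintro ⟨⟨a, b⟩, h⟩ ⟨⟨a', b'⟩, h'⟩ e
  have h : b = 1 := h
  have h' : b' = 1 := h'
  have e : a = a' := e
  subst h h' e
  rfl

/-- Extensions of residually `C` by `C` (via the Kaloujnine-Krasner embedding). -/
theorem sep_of_ker (hC : IsRootClass C) {G Q : Type u} [Group G] [Group Q] (f : G →* Q)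
    (hf : Function.Surjective f) (hQ : C Q) (hK : ∀ g : f.ker, g ≠ 1 → SepBy C g)
    (g : G) (hg : g ≠ 1) : SepBy C g := by
  by_cases hfg : f g = 1
  swap
  · exact ⟨Q, _, f, hQ, hfg⟩
  obtain ⟨s, hs⟩ : ∃ s : Q → G, ∀ q, f (s q) = q := ⟨_, Function.surjInv_eq hf⟩
  have hs1 : s 1 ∈ f.ker := hs 1
  obtain ⟨X, _, σ, hX, hσ⟩ := hK ⟨g, hfg⟩ (fun h => hg (congrArg Subtype.val h))
  have hm : ∀ (x : G) (q : Q), (s q)⁻¹ * x * s ((f x)⁻¹ * q) ∈ f.ker := by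
    intro x q
    simp [MonoidHom.mem_ker, hs]
  let Φ : G →* RegularWreathProduct X Q := MonoidHom.mk'
    (fun x => ⟨fun q => σ ⟨_, hm x q⟩, f x⟩) (by
      intro x y
      ext q
      · simp only [RegularWreathProduct.mul_left, Pi.mul_apply]
        rw [← map_mul]
        congr 1
        ext
        simp [mul_assoc]
      · simp)
  refine ⟨_, _, Φ, mem_wreath hC hX hQ, ?_⟩
  intro h
  have h2 := congrFun (congrArg RegularWreathProduct.left h) 1
  change σ ⟨_, hm g 1⟩ = 1 at h2
  have h3 : (⟨_, hm g 1⟩ : f.ker) = (⟨s 1, hs1⟩)⁻¹ * ⟨g, hfg⟩ * ⟨s 1, hs1⟩ := by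
    ext
    simp [hfg]
  rw [h3] at h2
  apply hσ
  have h4 : σ ⟨g, hfg⟩ = σ ⟨s 1, hs1⟩ * σ ((⟨s 1, hs1⟩)⁻¹ * ⟨g, hfg⟩ * ⟨s 1, hs1⟩)
      * (σ ⟨s 1, hs1⟩)⁻¹ := by
    simp [mul_assoc]
  rw [h4, h2]
  simp

/-- A common `C`-group separating finitely many elements in a family of groups. -/
theorem common_sep (hC : IsRootClass C) {ι : Type*} (F : ι → Type u) [∀ i, Group (F i)]
    (l : List (Σ i, F i)) (hl : ∀ p ∈ l, SepBy C p.2) :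
    ∃ (Q : Type u) (_ : Group Q) (σ : ∀ i, F i →* Q), C Q ∧ ∀ p ∈ l, σ p.1 p.2 ≠ 1 := by
  classical
  induction l with
  | nil => exact ⟨PUnit, inferInstance, fun _ => 1, mem_unit hC, by simp⟩
  | cons p l ih =>
    obtain ⟨Q, _, σ, hQ, hσ⟩ := ih (fun p hp => hl p (List.mem_cons_of_mem _ hp))
    obtain ⟨X, _, τ, hX, hτ⟩ := hl p List.mem_cons_self
    obtain ⟨i, g⟩ := p
    refine ⟨X × Q, inferInstance,
      fun k => MonoidHom.prod (if h : k = i then h ▸ τ else 1) (σ k), mem_prod hC hX hQ, ?_⟩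
    intro p hp
    rcases List.mem_cons.1 hp with rfl | hp
    · intro h
      apply hτ
      have := congrArg Prod.fst h
      simpa using this
    · intro h
      exact hσ p hp (congrArg Prod.snd h)

theorem mk_ne_one {X : Type*} {l : List (X × Bool)} (h : FreeGroup.IsReduced l) (h0 : l ≠ []) :
    FreeGroup.mk l ≠ 1 := by
  classical
  intro h1
  have h2 := congrArg FreeGroup.toWord h1
  rw [FreeGroup.toWord_mk, h.reduce_eq, FreeGroup.toWord_one] at h2
  exact h0 h2

/-- The edge-tracking homomorphism to the wreath product. -/
theorem exists_edge_hom {X H A : Type*} [Group H] [Group A] (h : FreeGroup X →* H)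
    (L : X × Bool) (a : A) : ∃ f : FreeGroup X →* RegularWreathProduct A H,
      (∀ g, (f g).right = h g) ∧
      (∀ y, y ≠ 1 → (f (FreeGroup.mk [L])).left y = 1) ∧
      ((f (FreeGroup.mk [L])).left 1 = a) ∧
      (∀ M : X × Bool, M.1 ≠ L.1 → (f (FreeGroup.mk [M])).left = 1) := by
  classical
  let d : RegularWreathProduct A H := ⟨fun y => if y = 1 then a else 1, h (FreeGroup.mk [L])⟩
  let f : FreeGroup X →* RegularWreathProduct A H := FreeGroup.lift fun x =>
    if x = L.1 then (if L.2 then d else d⁻¹) else ⟨1, h (FreeGroup.of x)⟩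
  have hL : f (FreeGroup.mk [L]) = d := by
    obtain ⟨x, b⟩ := L
    cases b <;> simp [f]
  refine ⟨f, ?_, ?_, ?_, ?_⟩
  · have : RegularWreathProduct.rightHom.comp f = h := by
      apply FreeGroup.ext_hom
      intro x
      obtain ⟨z, b⟩ := L
      by_cases hx : x = z
      · subst hx
        cases b
        · have : FreeGroup.mk [(x, false)] = (FreeGroup.of x)⁻¹ := rfl
          simp [f, d, this]
        · have : FreeGroup.mk [(x, true)] = (FreeGroup.of x) := rfl
          simp [f, d, this]
      · simp [f, hx]
    intro g
    exact DFunLike.congr_fun this g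
  · intro y hy
    rw [hL]
    simp [d, hy]
  · rw [hL]
    simp [d]
  · rintro ⟨x, b⟩ hM
    cases b
    · simp only [f, FreeGroup.lift_mk]
      ext y
      simp [hM]
    · simp only [f, FreeGroup.lift_mk]
      ext y
      simp [hM]

theorem mk_cons {X : Type*} (L : X × Bool) (l : List (X × Bool)) :
    FreeGroup.mk (L :: l) = FreeGroup.mk [L] * FreeGroup.mk l := rfl

theorem edge_left {X H A : Type*} [Group H] [Group A] (h : FreeGroup X →* H)
    (L : X × Bool) (f : FreeGroup X →* RegularWreathProduct A H)
    (hr : ∀ g, (f g).right = h g)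
    (h1 : ∀ y, y ≠ 1 → (f (FreeGroup.mk [L])).left y = 1)
    (h3 : ∀ M : X × Bool, M.1 ≠ L.1 → (f (FreeGroup.mk [M])).left = 1)
    (v : List (X × Bool)) : ∀ (y : H),
    (∀ s t, v = s ++ t → t ≠ [] → h (FreeGroup.mk s) ≠ y) →
    (∀ s, v ≠ s ++ [(L.1, !L.2)]) → (f (FreeGroup.mk v)).left y = 1 := by
  induction v with
  | nil =>
    intro y _ _
    rw [← FreeGroup.one_eq_mk, map_one]
    rfl
  | cons M v ih =>
    intro y hs hl
    rw [mk_cons, map_mul, RegularWreathProduct.mul_left, Pi.mul_apply, hr]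
    have hy : y ≠ 1 := by
      have := hs [] (M :: v) rfl (by simp)
      rw [← FreeGroup.one_eq_mk, map_one] at this
      exact this.symm
    rw [ih, mul_one]
    · by_cases hM : M.1 = L.1
      · by_cases hM2 : M.2 = L.2
        · have : M = L := Prod.ext hM hM2
          rw [this]
          exact h1 y hy
        · have hML : M = (L.1, !L.2) := by
            refine Prod.ext hM ?_
            revert hM2
            cases M.2 <;> cases L.2 <;> simp
          have hinv : FreeGroup.mk [M] = (FreeGroup.mk [L])⁻¹ := by
            rw [hML]
            rfl
          have hv : v ≠ [] := by
            rintro rfl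
            exact hl [] (by rw [hML]; rfl)
          have h4 := hs [M] v rfl hv
          rw [hinv, map_inv] at h4
          rw [hinv, map_inv, RegularWreathProduct.inv_left, hr]
          have h5 := h1 (h (FreeGroup.mk [L]) * y) (by
            intro h6
            exact h4 (inv_eq_of_mul_eq_one_right h6))
          simp [h5]
      · rw [h3 M hM]
        rfl
    · intro s t hst ht h6
      refine hs (M :: s) t (by rw [hst]; rfl) ht ?_
      rw [mk_cons, map_mul, h6]
      simp
    · intro s hst
      exact hl (M :: s) (by rw [hst]; rfl)

theorem sep_reduced (hC : IsRootClass C) {X : Type u} (n : ℕ) : ∀ (l : List (X × Bool)),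
    l.length = n → FreeGroup.IsReduced l → l ≠ [] → SepBy C (FreeGroup.mk l) := by
  induction n using Nat.strong_induction_on with
  | _ n ih =>
  intro l hn hl h0
  obtain ⟨L, v, rfl⟩ := List.exists_cons_of_ne_nil h0
  by_cases hlast : ∃ s, v = s ++ [(L.1, !L.2)]
  · obtain ⟨s, rfl⟩ := hlast
    have hsne : s ≠ [] := by
      rintro rfl
      simp [FreeGroup.IsReduced] at hl
    have hsred : FreeGroup.IsReduced s :=
      hl.infix ⟨[L], [(L.1, !L.2)], by simp⟩
    obtain ⟨Q, _, σ, hQ, hσ⟩ := ih s.length (by simp at hn; omega) s rfl hsred hsne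
    refine ⟨Q, _, σ, hQ, ?_⟩
    have : FreeGroup.mk (L :: (s ++ [(L.1, !L.2)]))
        = FreeGroup.mk [L] * FreeGroup.mk s * (FreeGroup.mk [L])⁻¹ := by
      rw [FreeGroup.inv_mk, FreeGroup.mul_mk, FreeGroup.mul_mk]
      simp [FreeGroup.invRev]
    rw [this]
    rw [map_mul, map_mul, map_inv]
    intro h
    exact hσ (conj_eq_one_iff.1 h)
  · push Not at hlast
    obtain ⟨H, _, σ, hH, hσ⟩ := common_sep hC (fun _ : Unit => FreeGroup X)
      ((v.inits.filter (fun s => s.length < v.length)).map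
        (fun s => ⟨(), FreeGroup.mk (L :: s)⟩)) (by
        intro p hp
        simp only [List.mem_map, List.mem_filter, List.mem_inits, decide_eq_true_eq] at hp
        obtain ⟨s, ⟨hs, hlt⟩, rfl⟩ := hp
        have hpre : (L :: s) <+: (L :: v) := by simpa using hs
        exact ih _ (by simp at hn ⊢; omega) (L :: s) rfl (hl.infix hpre.isInfix) (by simp))
    obtain ⟨A, _, hA, _⟩ := hC.1
    obtain ⟨a, ha⟩ := exists_ne (1 : A)
    obtain ⟨f, hr, h1, h2, h3⟩ := exists_edge_hom (σ ()) L a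
    refine ⟨_, _, f, mem_wreath hC hA hH, ?_⟩
    intro hf
    have h4 := congrFun (congrArg RegularWreathProduct.left hf) 1
    rw [mk_cons, map_mul, RegularWreathProduct.mul_left, Pi.mul_apply, h2, hr,
      edge_left (σ ()) L f hr h1 h3 v _ _ hlast] at h4
    · apply ha
      simpa using h4
    · intro s t hst ht h5
      refine hσ ⟨(), FreeGroup.mk (L :: s)⟩ ?_ ?_
      · refine List.mem_map.2 ⟨s, ?_, rfl⟩
        simp only [List.mem_filter, List.mem_inits, decide_eq_true_eq]
        refine ⟨⟨t, hst.symm⟩, ?_⟩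
        rw [hst, List.length_append]
        have := List.length_pos_of_ne_nil ht
        omega
      · rw [mk_cons, map_mul, h5]
        simp

/-- Gruenberg: free groups are residually `C`. -/
theorem sep_free (hC : IsRootClass C) {X : Type u} (g : FreeGroup X) (hg : g ≠ 1) : SepBy C g := by
  classical
  have := sep_reduced hC _ g.toWord rfl FreeGroup.isReduced_toWord
    (fun h => hg (FreeGroup.toWord_eq_nil_iff.1 h))
  rwa [FreeGroup.mk_toWord] at this

/-- The shift action of `Q` on the free group on `ι × Q`. -/
def shiftAct (ι Q : Type u) [Group Q] : Q →* MulAut (FreeGroup (ι × Q)) :=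
  MonoidHom.mk' (fun q => FreeGroup.freeGroupCongr ((Equiv.refl ι).prodCongr (Equiv.mulLeft q)))
    (by
      intro p q
      apply MulEquiv.toMonoidHom_injective
      apply FreeGroup.ext_hom
      intro x
      obtain ⟨i, z⟩ := x
      simp [mul_assoc])

theorem shiftAct_of {ι Q : Type u} [Group Q] (q : Q) (x : ι × Q) :
    shiftAct ι Q q (FreeGroup.of x) = FreeGroup.of (x.1, q * x.2) := by
  obtain ⟨i, z⟩ := x
  simp [shiftAct]

theorem sep_semidirect (hC : IsRootClass C) {ι Q : Type u} [Group Q] (hQ : C Q)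
    (g : FreeGroup (ι × Q) ⋊[shiftAct ι Q] Q) (hg : g ≠ 1) : SepBy C g := by
  refine sep_of_ker hC SemidirectProduct.rightHom SemidirectProduct.rightHom_surjective hQ ?_ g hg
  intro x hx
  let j : (SemidirectProduct.rightHom : FreeGroup (ι × Q) ⋊[shiftAct ι Q] Q →* Q).ker →*
      FreeGroup (ι × Q) := MonoidHom.mk' (fun x => x.1.left) (by
    rintro ⟨x, hx⟩ ⟨y, hy⟩
    have hx : x.right = 1 := hx
    simp [hx])
  refine sep_of_map j x (sep_free hC _ ?_)
  intro h
  apply hx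
  apply Subtype.ext
  exact SemidirectProduct.ext h x.2

/-- The reduced free-group word attached to a reduced word of a free product. -/
def letters {ι Q : Type u} [Group Q] {F : ι → Type u} [∀ i, Group (F i)] (σ : ∀ i, F i →* Q) :
    List (Σ i, F i) → Q → List ((ι × Q) × Bool)
  | [], _ => []
  | p :: l, r => ((p.1, r), true) :: ((p.1, r * σ p.1 p.2), false) :: letters σ l (r * σ p.1 p.2)

theorem letters_reduced {ι Q : Type u} [Group Q] {F : ι → Type u} [∀ i, Group (F i)]
    (σ : ∀ i, F i →* Q) (l : List (Σ i, F i)) (hl : ∀ p ∈ l, σ p.1 p.2 ≠ 1)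
    (hc : l.IsChain fun l l' => l.1 ≠ l'.1) : ∀ r, FreeGroup.IsReduced (letters σ l r) := by
  induction l with
  | nil => intro r; exact List.IsChain.nil
  | cons p l ih =>
    intro r
    have hp := hl p List.mem_cons_self
    have ih' := ih (fun p hp => hl p (List.mem_cons_of_mem _ hp)) hc.tail (r * σ p.1 p.2)
    refine List.IsChain.cons_cons (by simp [hp]) ?_
    cases l with
    | nil => exact List.IsChain.singleton _
    | cons p' l =>
      have hne : p.1 ≠ p'.1 := by
        simp at hc
        exact hc.1
      exact List.IsChain.cons_cons (by simp [hne]) ih'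

theorem sep_coprod (hC : IsRootClass C) {ι : Type u} (F : ι → Type u) [∀ i, Group (F i)]
    (hF : ∀ i (g : F i), g ≠ 1 → SepBy C g) (g : Monoid.CoprodI F) (hg : g ≠ 1) : SepBy C g := by
  classical
  obtain ⟨w, rfl⟩ : ∃ w : Monoid.CoprodI.Word F, w.prod = g :=
    ⟨Monoid.CoprodI.Word.equiv g, Monoid.CoprodI.Word.equiv.symm_apply_apply g⟩
  obtain ⟨Q, _, σ, hQ, hσ⟩ := common_sep hC F w.toList (fun p hp => hF _ _ (w.ne_one p hp))
  let t : ι → FreeGroup (ι × Q) ⋊[shiftAct ι Q] Q := fun i =>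
    SemidirectProduct.inl (FreeGroup.of (i, 1))
  let τ : Monoid.CoprodI F →* FreeGroup (ι × Q) ⋊[shiftAct ι Q] Q :=
    Monoid.CoprodI.lift fun i =>
      (MulAut.conj (t i)).toMonoidHom.comp (SemidirectProduct.inr.comp (σ i))
  have key : ∀ (l : List (Σ i, F i)) (r : Q),
      (SemidirectProduct.inr r * τ (l.map fun p : (Σ i, F i) => (Monoid.CoprodI.of p.2 : Monoid.CoprodI F)).prod).left
        = FreeGroup.mk (letters σ l r) := by
    intro l
    induction l with
    | nil => intro r; simp [letters, FreeGroup.one_eq_mk]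
    | cons p l ih =>
      intro r
      have e : SemidirectProduct.inr r * τ ((p :: l).map fun p : (Σ i, F i) => (Monoid.CoprodI.of p.2 : Monoid.CoprodI F)).prod
          = SemidirectProduct.inl (FreeGroup.of (p.1, r) * (FreeGroup.of (p.1, r * σ p.1 p.2))⁻¹) *
            (SemidirectProduct.inr (r * σ p.1 p.2) *
              τ (l.map fun p : (Σ i, F i) => (Monoid.CoprodI.of p.2 : Monoid.CoprodI F)).prod) := by
        rw [List.map_cons, List.prod_cons, map_mul, ← mul_assoc, ← mul_assoc]
        congr 1
        ext
        · simp [τ, t, shiftAct_of]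
        · simp [τ, t]
      rw [e, SemidirectProduct.mul_left, SemidirectProduct.left_inl, SemidirectProduct.right_inl,
        ih]
      simp only [map_one, MulAut.one_apply]
      rfl
  refine sep_of_map τ _ (sep_semidirect hC hQ _ ?_)
  intro h1
  have h2 := key w.toList 1
  have h3 : (w.toList.map fun p : (Σ i, F i) => (Monoid.CoprodI.of p.2 : Monoid.CoprodI F)).prod = w.prod := rfl
  rw [h3, h1] at h2
  simp only [map_one, mul_one, SemidirectProduct.one_left] at h2
  refine mk_ne_one (letters_reduced σ w.toList hσ w.chain_ne 1) ?_ h2.symm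
  intro h4
  apply hg
  rw [← h3]
  cases hw : w.toList with
  | nil => simp
  | cons p l =>
    rw [hw] at h4
    simp [letters] at h4

end root

/-- Deduction of Theorem 1 from Proposition 3.4: if `C` is a root class, `Ω` is a family of
residually `C`-groups, `N ⊴ G` with `G/N ∈ C`, and `N` is a free product of a family of
groups each of which is free or embeds into a member of `Ω`, then `G` is residually a
`C`-group. -/
theorem stmt_18 (C : GClass.{u}) (hC : IsRootClass C)
    (κ : Type u) (Ω : κ → Type u) [∀ k, Group (Ω k)]
    (hΩ : ∀ k, Residually C (Ω k))
    (G : Type u) [Group G] (N : Subgroup G) [N.Normal] (hQ : C (G ⧸ N))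
    (ι : Type u) (F : ι → Type u) [∀ i, Group (F i)]
    (e : N ≃* Monoid.CoprodI F)
    (hfac : ∀ i, (∃ β : Type u, Nonempty (F i ≃* FreeGroup β)) ∨
      ∃ (k : κ) (φ : F i →* Ω k), Function.Injective φ) :
    Residually C G := by
  apply residually_of_sep hC
  refine sep_of_ker hC (QuotientGroup.mk' N) (QuotientGroup.mk'_surjective N) hQ ?_
  intro x hx
  have hN : (QuotientGroup.mk' N).ker = N := QuotientGroup.ker_mk' N
  let j : (QuotientGroup.mk' N).ker →* Monoid.CoprodI F :=
    e.toMonoidHom.comp (MulEquiv.subgroupCongr hN).toMonoidHom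
  refine sep_of_map j x (sep_coprod hC F ?_ _ ?_)
  · intro i g hg
    rcases hfac i with ⟨β, ⟨ψ⟩⟩ | ⟨k, φ, hφ⟩
    · exact sep_of_map ψ.toMonoidHom g (sep_free hC _ (by simpa using hg))
    · exact sep_of_map φ g (sep_of_residually (hΩ k) _
        (fun h => hg (hφ (h.trans (map_one φ).symm))))
  · intro h
    apply hx
    have h2 : e (MulEquiv.subgroupCongr hN x) = 1 := h
    simpa using h2
end
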